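/- Let T ⊆ 2^{<ℕ} be a tree of binary strings. Then: (i) T is Π⁰₁ if and only if Ψ(T) is a Π⁰₁ closed subset of ℝ²; (ii) T is c.e. if and only if Ψ(T) is a c.e. closed subset of ℝ²; (iii) T is computable if and only if Ψ(T) is a computable closed subset of ℝ². -/

import Mathlib

open Set Metric

section TopDefs

variable {α : Type*} [TopologicalSpace α]

/-- `A ⊆ α` is an arc with endpoints `x` and `y`:
a homeomorphic (continuous injective) image of `[0,1]` sending `0 ↦ x`, `1 ↦ y`. -/
def IsArc (A : Set α) (x y : α) : Prop :=
  ∃ f : Set.Icc (0:ℝ) 1 → α, Continuous f ∧ Function.Injective f ∧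
    Set.range f = A ∧ f ⟨0, by norm_num⟩ = x ∧ f ⟨1, by norm_num⟩ = y

/-- A continuum: a nonempty compact connected set. -/
def IsContinuum (X : Set α) : Prop := IsCompact X ∧ IsConnected X

/-- Any two distinct points of `X` are endpoints of an arc contained in `X`. -/
def ArcwiseConnectedSet (X : Set α) : Prop :=
  ∀ x ∈ X, ∀ y ∈ X, x ≠ y → ∃ A, A ⊆ X ∧ IsArc A x y

/-- `X` is unicoherent: for all closed connected `A, B ⊆ X` with `A ∪ B = X`,
the intersection `A ∩ B` is connected. -/
def UnicoherentSet (X : Set α) : Prop :=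
  ∀ A B : Set α, A ⊆ X → B ⊆ X → IsClosed A → IsClosed B →
    IsConnected A → IsConnected B → A ∪ B = X → IsConnected (A ∩ B)

/-- Every subcontinuum of `X` is unicoherent. -/
def HereditarilyUnicoherent (X : Set α) : Prop :=
  ∀ Y, Y ⊆ X → IsContinuum Y → UnicoherentSet Y

/-- A dendroid: an arcwise connected, hereditarily unicoherent continuum. -/
def IsDendroid (X : Set α) : Prop :=
  IsContinuum X ∧ ArcwiseConnectedSet X ∧ HereditarilyUnicoherent X

/-- The unit circle `S¹`. -/
def unitCircle : Set (EuclideanSpace ℝ (Fin 2)) := Metric.sphere 0 1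

/-- A dendrite: a locally connected continuum containing no subset homeomorphic to `S¹`. -/
def IsDendrite (X : Set α) : Prop :=
  IsContinuum X ∧ LocallyConnectedSpace ↥X ∧
    ∀ S : Set α, S ⊆ X → IsEmpty (↥S ≃ₜ ↥unitCircle)

/-- `x` and `y` lie in the same arc-component of `Y`. -/
def SameArcComponent (Y : Set α) (x y : α) : Prop :=
  x = y ∨ ∃ A, A ⊆ Y ∧ IsArc A x y

/-- `x` is a ramification point of `X`: `X \ {x}` has at least three arc-components. -/
def IsRamificationPoint (X : Set α) (x : α) : Prop :=
  x ∈ X ∧ ∃ u v w, u ∈ X \ {x} ∧ v ∈ X \ {x} ∧ w ∈ X \ {x} ∧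
    ¬ SameArcComponent (X \ {x}) u v ∧ ¬ SameArcComponent (X \ {x}) u w ∧
    ¬ SameArcComponent (X \ {x}) v w

/-- A tree (as a continuum): a dendrite with finitely many ramification points. -/
def IsTreeContinuum (X : Set α) : Prop :=
  IsDendrite X ∧ {x | IsRamificationPoint X x}.Finite

end TopDefs

section CompDefs

/-- The rational open ball in `ℝ²` coded by `((q₁, q₂), r)`. -/
def ballOfCode (c : (ℚ × ℚ) × ℚ) : Set (ℝ × ℝ) :=
  {x | dist x (((c.1.1 : ℝ), (c.1.2 : ℝ)) : ℝ × ℝ) < (c.2 : ℝ)}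

/-- A closed set `F ⊆ ℝ²` is `Π⁰₁` if it is the complement of the union of the rational
open balls coded by some c.e. set of codes. -/
def IsPi01Closed (F : Set (ℝ × ℝ)) : Prop :=
  ∃ W : (ℚ × ℚ) × ℚ → Prop, REPred W ∧ F = Set.univ \ ⋃ c ∈ {c | W c}, ballOfCode c

/-- `F ⊆ ℝ²` is c.e. closed if the set of codes of rational open balls meeting `F` is c.e. -/
def IsCEClosed (F : Set (ℝ × ℝ)) : Prop :=
  REPred (fun c : (ℚ × ℚ) × ℚ => (F ∩ ballOfCode c).Nonempty)

/-- A computable closed subset of `ℝ²`: both `Π⁰₁` and c.e. closed. -/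
def IsComputableClosed (F : Set (ℝ × ℝ)) : Prop :=
  IsPi01Closed F ∧ IsCEClosed F

/-- A point of `ℝ²` is computable if the set of codes of rational open balls
containing it is c.e. -/
def IsComputablePoint (x : ℝ × ℝ) : Prop :=
  REPred (fun c : (ℚ × ℚ) × ℚ => x ∈ ballOfCode c)

end CompDefs

section PsiDefs

/-- A tree of binary strings: a set of finite binary strings closed under prefixes. -/
def IsTreeOfStrings (T : Set (List Bool)) : Prop :=
  ∀ σ ∈ T, ∀ τ : List Bool, τ <+: σ → τ ∈ T

/-- The point `ψ(σ) ∈ ℝ²` associated with the binary string `σ`. -/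
noncomputable def psiPt (σ : List Bool) : ℝ × ℝ :=
  ((3:ℝ) ^ (-(σ.length : ℤ)) / 2 +
      2 * ∑ i ∈ Finset.range σ.length,
        (if σ.getD i false then (3:ℝ) ^ (-((i : ℤ) + 1)) else 0),
    (2:ℝ) ^ (-(σ.length : ℤ)))

/-- The planar embedding `Ψ(T)` of a tree `T` of binary strings: the closure of the union
of the segments from `ψ(σ⁻)` to `ψ(σ)` over nonempty `σ ∈ T` (together with the points
`ψ(σ)`, `σ ∈ T`, which makes no difference except for the degenerate trees `∅`, `{⟨⟩}`). -/
noncomputable def PsiSet (T : Set (List Bool)) : Set (ℝ × ℝ) :=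
  closure (psiPt '' T ∪ ⋃ σ ∈ T, ⋃ (_ : σ ≠ []), segment ℝ (psiPt σ.dropLast) (psiPt σ))

end PsiDefs

/-!
For `b ∈ {0, 1}` the map `(x, y) ↦ ((x + 2b) / 3, y / 2)` carries `ψ(σ)` to `ψ(bσ)`. It contracts
distances by a factor between `1 / 3` and `1 / 2`, and its image of the embedded tree lies on the
`b`-side of the line `x = 1 / 2`. By induction on `σ`, a point of the edge at `τ` which is closer
than `3 ^ (-(|σ| + 1))` to `ψ(σ)` forces `σ` to be an initial segment of `τ`. Hence `σ ∈ T` if and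
only if `ψ(σ) ∈ Ψ(T)`, if and only if that rational ball around `ψ(σ)` meets `Ψ(T)`, which recovers
an enumeration of `T`, or of its complement, from one of `Ψ(T)`.

Conversely, an edge below a string of length `N` stays within `2 ^ (-N)` of the point of that
string. So the edges at the strings of length at most `N`, cut into `N + 1` pieces, provide a
finite list of rational points, each tagged with a string, such that the points with tags in `T`
lie in `Ψ(T)` and are `1 / (N + 1)`-dense in it. Enumerating `T` finds the balls which contain such
a point, and enumerating the complement of `T` finds the balls which, at some stage `N`, contain
none of them within the error `1 / (N + 1)`.
-/

section ComputableLists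

variable {α β γ : Type*} [Primcodable α] [Primcodable β] [Primcodable γ]

theorem computable_list_foldl {f : α → List β} {g : α → γ} {h : α → γ × β → γ}
    (hf : Computable f) (hg : Computable g) (hh : Computable₂ h) :
    Computable fun a => (f a).foldl (fun s b => h a (s, b)) (g a) := by
  have hstep : Computable₂ fun (a : α) (x : ℕ × γ) =>
      ((f a)[x.1]?.map fun b => h a (x.2, b)).getD x.2 :=
    Computable.option_getD
      (Computable.option_map
        (Computable.list_getElem?.comp (hf.comp Computable.fst)
          (Computable.fst.comp Computable.snd))
        (hh.comp (Computable.fst.comp Computable.fst)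
          ((Computable.snd.comp (Computable.snd.comp Computable.fst)).pair Computable.snd)))
      (Computable.snd.comp Computable.snd)
  refine (Computable.nat_rec (Computable.list_length.comp hf) hg hstep).of_eq fun a => ?_
  have htake : ∀ n, Nat.rec (motive := fun _ => γ) (g a)
      (fun n s => ((f a)[n]?.map fun b => h a (s, b)).getD s) n =
      ((f a).take n).foldl (fun s b => h a (s, b)) (g a) := by
    intro n
    induction n with
    | zero => simp
    | succ n ih =>
      simp only [ih, List.take_add_one, List.foldl_append]
      cases (f a)[n]? <;> simp
  simpa using htake (f a).length

theorem computable_list_foldr {f : α → List β} {g : α → γ} {h : α → β × γ → γ}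
    (hf : Computable f) (hg : Computable g) (hh : Computable₂ h) :
    Computable fun a => (f a).foldr (fun b s => h a (b, s)) (g a) :=
  (computable_list_foldl (h := fun a x => h a (x.2, x.1)) (Computable.list_reverse.comp hf) hg
    (hh.comp Computable.fst ((Computable.snd.comp Computable.snd).pair
      (Computable.fst.comp Computable.snd)))).of_eq fun a => by simp

theorem computable_list_flatMap {f : α → List β} {g : α → β → List γ}
    (hf : Computable f) (hg : Computable₂ g) : Computable fun a => (f a).flatMap (g a) :=
  (computable_list_foldr (h := fun a x => g a x.1 ++ x.2) hf (Computable.const [])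
    (Computable.list_append.comp
      (hg.comp Computable.fst (Computable.fst.comp Computable.snd))
      (Computable.snd.comp Computable.snd))).of_eq fun a => by
    induction f a with
    | nil => rfl
    | cons b l ih => rw [List.foldr_cons, ih, List.flatMap_cons]

theorem computable_list_map {f : α → List β} {g : α → β → γ}
    (hf : Computable f) (hg : Computable₂ g) : Computable fun a => (f a).map (g a) :=
  (computable_list_flatMap (g := fun a b => [g a b]) hf
    (Computable.list_cons.comp hg (Computable.const []))).of_eq fun _ =>
      List.map_eq_flatMap.symm

theorem computable_list_any {f : α → List β} {g : α → β → Bool}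
    (hf : Computable f) (hg : Computable₂ g) : Computable fun a => (f a).any (g a) :=
  (computable_list_foldr (h := fun a x => g a x.1 || x.2) hf (Computable.const false)
    (Primrec.or.to_comp.comp
      (hg.comp Computable.fst (Computable.fst.comp Computable.snd))
      (Computable.snd.comp Computable.snd))).of_eq fun a => by
    induction f a with
    | nil => rfl
    | cons b l ih => rw [List.foldr_cons, ih, List.any_cons]

theorem computable_list_all {f : α → List β} {g : α → β → Bool}
    (hf : Computable f) (hg : Computable₂ g) : Computable fun a => (f a).all (g a) :=
  (Primrec.not.to_comp.comp (computable_list_any (g := fun a b => !g a b) hf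
    (Primrec.not.to_comp.comp hg))).of_eq fun a => by simp [List.all_eq_not_any_not]

end ComputableLists

section PredicateClosure

variable {α β : Type*} [Primcodable α] [Primcodable β]

theorem computablePred_and {p q : α → Prop} (hp : ComputablePred p) (hq : ComputablePred q) :
    ComputablePred fun a => p a ∧ q a := by
  obtain ⟨f, hf, rfl⟩ := ComputablePred.computable_iff.1 hp
  obtain ⟨g, hg, rfl⟩ := ComputablePred.computable_iff.1 hq
  refine ComputablePred.computable_iff.2 ⟨fun a => f a && g a, Primrec.and.to_comp.comp hf hg, ?_⟩
  simp only [Bool.and_eq_true]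

theorem rePred_comp {p : β → Prop} (hp : REPred p) {f : α → β} (hf : Computable f) :
    REPred fun a => p (f a) :=
  Partrec.comp (f := fun b => Part.assert (p b) fun _ => Part.some ()) hp hf

theorem rePred_and {p q : α → Prop} (hp : REPred p) (hq : REPred q) :
    REPred fun a => p a ∧ q a := by
  have hbind : Partrec fun a => (Part.assert (p a) fun _ => Part.some ()).bind
      fun _ => Part.assert (q a) fun _ => Part.some () :=
    Partrec.bind hp (rePred_comp hq Computable.fst)
  exact hbind.dom_re.of_eq fun a => by simp [Part.assert]

theorem rePred_or {p q : α → Prop} (hp : REPred p) (hq : REPred q) :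
    REPred fun a => p a ∨ q a := by
  obtain ⟨k, hk, hdom⟩ := Partrec.merge' hp hq
  exact hk.dom_re.of_eq fun a => by simp [(hdom a).2, Part.assert]

theorem rePred_of_exists_nat {f : α → ℕ → Bool} (hf : Computable₂ f) :
    REPred fun a => ∃ n, f a n := by
  refine (Partrec.rfind (p := fun a n => Part.some (f a n)) hf.partrec₂).dom_re.of_eq fun a => ?_
  exact Nat.rfind_dom.trans (by simp)

-- `f a n` says that the semi-decision procedure for `p` halts on `a` within `n` steps.
theorem exists_monotone_of_rePred {p : α → Prop} (hp : REPred p) :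
    ∃ f : α → ℕ → Bool, Computable₂ f ∧ (∀ a, Monotone (f a)) ∧ ∀ a, p a ↔ ∃ n, f a n := by
  obtain ⟨c, hc⟩ := Nat.Partrec.Code.exists_code.1 hp
  refine ⟨fun a n => (Nat.Partrec.Code.evaln n c (Encodable.encode a)).isSome, ?_, ?_, ?_⟩
  · exact Primrec.option_isSome.to_comp.comp (Nat.Partrec.Code.primrec_evaln.to_comp.comp
      ((Computable.snd.pair (Computable.const c)).pair (Computable.encode.comp Computable.fst)))
  · intro a m n hmn
    refine Bool.le_iff_imp.2 fun hm => ?_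
    obtain ⟨x, hx⟩ := Option.isSome_iff_exists.1 hm
    exact Option.isSome_iff_exists.2 ⟨x, Nat.Partrec.Code.evaln_mono hmn hx⟩
  · intro a
    have hhalts : p a ↔ ∃ x, x ∈ Nat.Partrec.Code.eval c (Encodable.encode a) := by
      rw [hc]
      simp
    simp only [hhalts, Nat.Partrec.Code.evaln_complete, Option.isSome_iff_exists]
    exact exists_comm

theorem rePred_exists {p : α → β → Prop} (hp : REPred fun x : α × β => p x.1 x.2) :
    REPred fun a => ∃ b, p a b := by
  obtain ⟨f, hf, -, hpf⟩ := exists_monotone_of_rePred hp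
  have hsearch : Computable₂ fun (a : α) (m : ℕ) =>
      ((Encodable.decode (α := β × ℕ) m).map fun x => f (a, x.1) x.2).getD false :=
    Computable.option_getD
      (Computable.option_map (Computable.decode.comp Computable.snd)
        (hf.comp ((Computable.fst.comp Computable.fst).pair
          (Computable.fst.comp Computable.snd)) (Computable.snd.comp Computable.snd)))
      (Computable.const false)
  refine (rePred_of_exists_nat hsearch).of_eq fun a => ⟨?_, ?_⟩
  · rintro ⟨m, hm⟩
    cases hx : Encodable.decode (α := β × ℕ) m with
    | none => simp [hx] at hm
    | some x => exact ⟨x.1, (hpf (a, x.1)).2 ⟨x.2, by simpa [hx] using hm⟩⟩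
  · rintro ⟨b, hb⟩
    obtain ⟨n, hn⟩ := (hpf (a, b)).1 hb
    exact ⟨Encodable.encode (b, n), by simpa using hn⟩

theorem rePred_exists_mem_list {p : α → β → Prop} (hp : REPred fun x : α × β => p x.1 x.2)
    {l : α → List β} (hl : Computable l) : REPred fun a => ∃ b ∈ l a, p a b := by
  obtain ⟨f, hf, -, hpf⟩ := exists_monotone_of_rePred hp
  have hany : Computable₂ fun (a : α) (n : ℕ) => (l a).any fun b => f (a, b) n :=
    computable_list_any (hl.comp Computable.fst)
      (hf.comp ((Computable.fst.comp Computable.fst).pair Computable.snd)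
        (Computable.snd.comp Computable.fst))
  refine (rePred_of_exists_nat hany).of_eq fun a => ?_
  simp only [List.any_eq_true, hpf (a, _)]
  exact ⟨fun ⟨n, b, hb, hn⟩ => ⟨b, hb, n, hn⟩, fun ⟨b, hb, n, hn⟩ => ⟨n, b, hb, hn⟩⟩

-- Finitely many halting procedures have all halted after the maximal number of steps.
theorem rePred_forall_mem_list {p : α → β → Prop} (hp : REPred fun x : α × β => p x.1 x.2)
    {l : α → List β} (hl : Computable l) : REPred fun a => ∀ b ∈ l a, p a b := by
  obtain ⟨f, hf, hmono, hpf⟩ := exists_monotone_of_rePred hp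
  have hall : Computable₂ fun (a : α) (n : ℕ) => (l a).all fun b => f (a, b) n :=
    computable_list_all (hl.comp Computable.fst)
      (hf.comp ((Computable.fst.comp Computable.fst).pair Computable.snd)
        (Computable.snd.comp Computable.fst))
  have heventually : ∀ x, p x.1 x.2 ↔ ∀ᶠ n in Filter.atTop, f x n := fun x =>
    (hpf x).trans ⟨fun ⟨n, hn⟩ => Filter.eventually_atTop.2
      ⟨n, fun m hm => Bool.le_iff_imp.1 (hmono x hm) hn⟩, Filter.Eventually.exists⟩
  refine (rePred_of_exists_nat hall).of_eq fun a => ?_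
  simp only [List.all_eq_true, heventually (a, _)]
  refine ⟨fun ⟨n, hn⟩ b hb => ?_, fun h => ?_⟩
  · exact (heventually (a, b)).1 ((hpf (a, b)).2 ⟨n, hn b hb⟩)
  · exact ((Filter.eventually_all_finite (l a).finite_toSet).2 h).exists

end PredicateClosure

section RationalArithmetic

variable {α β : Type*} [Primcodable α] [Primcodable β]

theorem computable_of_graph {f : α → β} (hf : ComputablePred fun x : α × β => f x.1 = x.2) :
    Computable f := by
  obtain ⟨g, hg, hfg⟩ := ComputablePred.computable_iff.1 hf
  have hgraph : ∀ a b, f a = b ↔ g (a, b) = true := fun a b => iff_of_eq (congrFun hfg (a, b))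
  have hguess : Computable₂ fun (a : α) (n : ℕ) =>
      (Encodable.decode (α := β) n).bind fun b => cond (g (a, b)) (some b) none :=
    Computable.option_bind (Computable.decode.comp Computable.snd)
      (Computable.cond (hg.comp ((Computable.fst.comp Computable.fst).pair Computable.snd))
        (Computable.option_some.comp Computable.snd) (Computable.const none))
  refine (Partrec.rfindOpt hguess).of_eq_tot fun a => ?_
  have hsound : ∀ n b, b ∈ (Encodable.decode (α := β) n).bind
      (fun b => cond (g (a, b)) (some b) none) → b = f a := by
    intro n b hb
    obtain ⟨b', -, hb'⟩ := Option.mem_bind_iff.1 hb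
    cases hgb : g (a, b') with
    | false => simp [hgb] at hb'
    | true =>
      rw [hgb, cond_true, Option.mem_some_iff] at hb'
      exact hb' ▸ ((hgraph a b').2 hgb).symm
  have hdom : (Nat.rfindOpt fun n => (Encodable.decode (α := β) n).bind
      fun b => cond (g (a, b)) (some b) none).Dom :=
    Nat.rfindOpt_dom.2 ⟨Encodable.encode (f a), f a, by simp [(hgraph a (f a)).1 rfl]⟩
  obtain ⟨n, hn⟩ := Nat.rfindOpt_spec (Part.get_mem hdom)
  exact hsound n _ hn ▸ Part.get_mem hdom

theorem primrec_nat_count {p : ℕ → Prop} [DecidablePred p] (hp : PrimrecPred p) :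
    Primrec (Nat.count p) :=
  (Primrec.list_length.comp ((Primrec.listFilter hp).comp Primrec.list_range)).of_eq fun _ =>
    List.countP_eq_length_filter.symm

theorem coprime_iff_forall_lt {n d : ℕ} :
    n.Coprime d ↔ ∀ k < n + d + 1, n % k = 0 ∧ d % k = 0 → k = 1 := by
  refine ⟨fun h k _ hk => Nat.eq_one_of_dvd_coprimes h (Nat.dvd_of_mod_eq_zero hk.1)
    (Nat.dvd_of_mod_eq_zero hk.2), fun h => h _ ?_ ?_⟩
  · rcases n.eq_zero_or_pos with rfl | hn
    · simp
    · have := Nat.gcd_le_left d hn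
      omega
  · exact ⟨Nat.mod_eq_zero_of_dvd (Nat.gcd_dvd_left n d),
      Nat.mod_eq_zero_of_dvd (Nat.gcd_dvd_right n d)⟩

theorem primrecRel_coprime : PrimrecRel Nat.Coprime := by
  have hdvd : PrimrecRel fun (k : ℕ) (x : ℕ × ℕ) => x.1 % k = 0 ∧ x.2 % k = 0 → k = 1 := by
    have hleft : PrimrecPred fun y : ℕ × ℕ × ℕ => y.2.1 % y.1 = 0 := Primrec.eq.comp
      (Primrec.nat_mod.comp (Primrec.fst.comp Primrec.snd) Primrec.fst) (Primrec.const 0)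
    have hright : PrimrecPred fun y : ℕ × ℕ × ℕ => y.2.2 % y.1 = 0 := Primrec.eq.comp
      (Primrec.nat_mod.comp (Primrec.snd.comp Primrec.snd) Primrec.fst) (Primrec.const 0)
    have hone : PrimrecPred fun y : ℕ × ℕ × ℕ => y.1 = 1 :=
      Primrec.eq.comp Primrec.fst (Primrec.const 1)
    exact ((hleft.and hright).not.or hone).of_eq fun _ => imp_iff_not_or.symm
  have hforall := hdvd.forall_mem_list.comp (Primrec.list_range.comp
    (Primrec.succ.comp (Primrec.nat_add.comp Primrec.fst Primrec.snd))) (Primrec.id (α := ℕ × ℕ))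
  exact hforall.of_eq fun _ => by simp only [List.mem_range, coprime_iff_forall_lt, id]

theorem primrec_int_natAbs : Primrec Int.natAbs :=
  (Primrec.nat_div.comp (Primrec.succ.comp Primrec.encode) (Primrec.const 2)).of_eq fun z => by
    cases z with
    | ofNat n => change (2 * n + 1) / 2 = n; omega
    | negSucc n => change (2 * n + 1 + 1) / 2 = n + 1; omega

theorem primrec_int_toNat : Primrec Int.toNat :=
  (Primrec.ite (Primrec.eq.comp (Primrec.nat_mod.comp Primrec.encode (Primrec.const 2))
    (Primrec.const 0)) primrec_int_natAbs (Primrec.const 0)).of_eq fun z => by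
    cases z with
    | ofNat n => exact if_pos (by change 2 * n % 2 = 0; omega)
    | negSucc n => exact if_neg (by change ¬ (2 * n + 1) % 2 = 0; omega)

/-- The code of a rational number as the pair of its numerator and denominator. The standard
encoding of `ℚ` is the position of this code among all such codes. -/
def numDenCode (q : ℚ) : ℕ := Nat.pair (Encodable.encode q.num) q.den

theorem mem_range_numDenCode {m : ℕ} : m ∈ range numDenCode ↔
    0 < m.unpair.2 ∧ (Denumerable.ofNat ℤ m.unpair.1).natAbs.Coprime m.unpair.2 := by
  constructor
  · rintro ⟨q, rfl⟩
    simpa only [numDenCode, Nat.unpair_pair, Denumerable.ofNat_encode] using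
      ⟨q.den_pos, q.reduced⟩
  · rintro ⟨hpos, hcop⟩
    exact ⟨⟨_, m.unpair.2, hpos.ne', hcop⟩, by
      simp only [numDenCode, Denumerable.encode_ofNat, Nat.pair_unpair]⟩

theorem primrecPred_mem_range_numDenCode : PrimrecPred (· ∈ range numDenCode) := by
  have hden : Primrec fun m : ℕ => m.unpair.2 := Primrec.snd.comp Primrec.unpair
  have hnum : Primrec fun m : ℕ => (Denumerable.ofNat ℤ m.unpair.1).natAbs :=
    primrec_int_natAbs.comp ((Primrec.ofNat ℤ).comp (Primrec.fst.comp Primrec.unpair))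
  exact ((Primrec.nat_lt.comp (Primrec.const 0) hden).and (primrecRel_coprime.comp hnum hden)).of_eq
    fun _ => mem_range_numDenCode.symm

theorem encode_rat_eq_count [DecidablePred (· ∈ range numDenCode)] (q : ℚ) :
    @Encodable.encode ℚ Primcodable.toEncodable q =
      Nat.count (· ∈ range numDenCode) (numDenCode q) := by
  have h : @Encodable.encode ℚ Primcodable.toEncodable q =
      @Nat.count (· ∈ range numDenCode) (@Encodable.decidableRangeEncode ℚ Rat.instEncodable)
        (numDenCode q) := rfl
  rw [h]
  congr

theorem computable_numDenCode : Computable numDenCode := by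
  classical
  have hcount := primrec_nat_count primrecPred_mem_range_numDenCode
  have hgraph : PrimrecPred fun x : ℚ × ℕ =>
      x.2 ∈ range numDenCode ∧ Nat.count (· ∈ range numDenCode) x.2 =
        @Encodable.encode ℚ Primcodable.toEncodable x.1 :=
    (primrecPred_mem_range_numDenCode.comp Primrec.snd).and
      (Primrec.eq.comp (hcount.comp Primrec.snd) (Primrec.encode.comp Primrec.fst))
  refine computable_of_graph (hgraph.computablePred.of_eq fun x => ⟨fun ⟨hmem, hx⟩ => ?_, ?_⟩)
  · exact Nat.count_injective (mem_range_self x.1) hmem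
      ((encode_rat_eq_count x.1).symm.trans hx.symm)
  · rintro hx
    rw [← hx, encode_rat_eq_count]
    exact ⟨mem_range_self x.1, rfl⟩

theorem computable_rat_num : Computable Rat.num :=
  ((Computable.ofNat ℤ).comp
    (Computable.fst.comp (Computable.unpair.comp computable_numDenCode))).of_eq fun q => by
    simp only [numDenCode, Nat.unpair_pair, Denumerable.ofNat_encode]

theorem computable_rat_den : Computable Rat.den :=
  (Computable.snd.comp (Computable.unpair.comp computable_numDenCode)).of_eq fun q => by
    simp only [numDenCode, Nat.unpair_pair]

theorem computable_rat_num_toNat : Computable fun q : ℚ => q.num.toNat :=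
  primrec_int_toNat.to_comp.comp computable_rat_num

theorem computable_rat_neg_num_toNat : Computable fun q : ℚ => (-q.num).toNat :=
  (Primrec.nat_sub.to_comp.comp (primrec_int_natAbs.to_comp.comp computable_rat_num)
    computable_rat_num_toNat).of_eq fun q => by omega

theorem rat_eq_toNat_sub_toNat_div (q : ℚ) :
    q = ((q.num.toNat : ℚ) - ((-q.num).toNat : ℚ)) / q.den := by
  have hnum : ((q.num.toNat : ℤ) - ((-q.num).toNat : ℤ)) = q.num := by omega
  have hcast : ((q.num.toNat : ℚ) - ((-q.num).toNat : ℚ)) = q.num := by exact_mod_cast hnum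
  rw [hcast, Rat.num_div_den]

theorem computable_nat_add {f g : α → ℕ} (hf : Computable f) (hg : Computable g) :
    Computable fun a => f a + g a := Primrec.nat_add.to_comp.comp hf hg

theorem computable_nat_mul {f g : α → ℕ} (hf : Computable f) (hg : Computable g) :
    Computable fun a => f a * g a := Primrec.nat_mul.to_comp.comp hf hg

theorem computable_rat_of_sub_div {p m d : α → ℕ} (hp : Computable p) (hm : Computable m)
    (hd : Computable d) (hd₀ : ∀ a, d a ≠ 0) :
    Computable fun a => ((p a : ℚ) - m a) / d a := by
  have hnum := computable_rat_num_toNat.comp (Computable.snd (α := α) (β := ℚ))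
  have hneg := computable_rat_neg_num_toNat.comp (Computable.snd (α := α) (β := ℚ))
  have hden := computable_rat_den.comp (Computable.snd (α := α) (β := ℚ))
  have hgraph : ComputablePred fun x : α × ℚ =>
      p x.1 * x.2.den + (-x.2.num).toNat * d x.1 = x.2.num.toNat * d x.1 + m x.1 * x.2.den :=
    ComputablePred.computable_iff.2 ⟨_, Primrec.eq.decide.to_comp.comp
      (computable_nat_add (computable_nat_mul (hp.comp Computable.fst) hden)
        (computable_nat_mul hneg (hd.comp Computable.fst)))
      (computable_nat_add (computable_nat_mul hnum (hd.comp Computable.fst))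
        (computable_nat_mul (hm.comp Computable.fst) hden)), by simp⟩
  refine computable_of_graph (hgraph.of_eq fun x => ?_)
  have hd' : (d x.1 : ℚ) ≠ 0 := Nat.cast_ne_zero.2 (hd₀ x.1)
  have hden' : (x.2.den : ℚ) ≠ 0 := Nat.cast_ne_zero.2 x.2.den_ne_zero
  conv_rhs => rw [rat_eq_toNat_sub_toNat_div x.2, div_eq_div_iff hd' hden']
  rw [← Nat.cast_inj (R := ℚ)]
  push_cast
  constructor <;> intro h <;> linarith

theorem computable_rat_add {f g : α → ℚ} (hf : Computable f) (hg : Computable g) :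
    Computable fun a => f a + g a := by
  have hmul {u v : ℚ → ℕ} (hu : Computable u) (hv : Computable v) :
      Computable fun a => u (f a) * v (g a) := computable_nat_mul (hu.comp hf) (hv.comp hg)
  refine (computable_rat_of_sub_div
    (computable_nat_add (hmul computable_rat_num_toNat computable_rat_den)
      (hmul computable_rat_den computable_rat_num_toNat))
    (computable_nat_add (hmul computable_rat_neg_num_toNat computable_rat_den)
      (hmul computable_rat_den computable_rat_neg_num_toNat))
    (hmul computable_rat_den computable_rat_den)
    fun a => mul_ne_zero (f a).den_ne_zero (g a).den_ne_zero).of_eq fun a => ?_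
  have hfden : ((f a).den : ℚ) ≠ 0 := Nat.cast_ne_zero.2 (f a).den_ne_zero
  have hgden : ((g a).den : ℚ) ≠ 0 := Nat.cast_ne_zero.2 (g a).den_ne_zero
  conv_rhs => rw [rat_eq_toNat_sub_toNat_div (f a), rat_eq_toNat_sub_toNat_div (g a),
    div_add_div _ _ hfden hgden]
  push_cast
  ring

theorem computable_rat_mul {f g : α → ℚ} (hf : Computable f) (hg : Computable g) :
    Computable fun a => f a * g a := by
  have hmul {u v : ℚ → ℕ} (hu : Computable u) (hv : Computable v) :
      Computable fun a => u (f a) * v (g a) := computable_nat_mul (hu.comp hf) (hv.comp hg)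
  refine (computable_rat_of_sub_div
    (computable_nat_add (hmul computable_rat_num_toNat computable_rat_num_toNat)
      (hmul computable_rat_neg_num_toNat computable_rat_neg_num_toNat))
    (computable_nat_add (hmul computable_rat_num_toNat computable_rat_neg_num_toNat)
      (hmul computable_rat_neg_num_toNat computable_rat_num_toNat))
    (hmul computable_rat_den computable_rat_den)
    fun a => mul_ne_zero (f a).den_ne_zero (g a).den_ne_zero).of_eq fun a => ?_
  conv_rhs => rw [rat_eq_toNat_sub_toNat_div (f a), rat_eq_toNat_sub_toNat_div (g a),
    div_mul_div_comm]
  push_cast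
  ring

theorem computable_rat_sub {f g : α → ℚ} (hf : Computable f) (hg : Computable g) :
    Computable fun a => f a - g a :=
  (computable_rat_add hf (computable_rat_mul (Computable.const (-1)) hg)).of_eq fun a => by ring

theorem computable_natCast_div {n d : α → ℕ} (hn : Computable n) (hd : Computable d)
    (hd₀ : ∀ a, d a ≠ 0) : Computable fun a => (n a : ℚ) / d a :=
  (computable_rat_of_sub_div hn (Computable.const 0) hd hd₀).of_eq fun a => by simp

theorem computablePred_rat_lt {f g : α → ℚ} (hf : Computable f) (hg : Computable g) :
    ComputablePred fun a => f a < g a := by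
  have hpos : Computable fun a => (g a - f a).num.toNat :=
    computable_rat_num_toNat.comp (computable_rat_sub hg hf)
  have hnat : ComputablePred fun a => 0 < (g a - f a).num.toNat :=
    ComputablePred.computable_iff.2 ⟨_, Primrec.nat_lt.decide.to_comp.comp
      (Computable.const 0) hpos, by simp⟩
  exact hnat.of_eq fun a => by rw [Int.lt_toNat, Nat.cast_zero, Rat.num_pos, sub_pos]

end RationalArithmetic

section RationalNets

/-- A rational point, viewed as a point of the real plane. -/
def ratPoint (p : ℚ × ℚ) : ℝ × ℝ := (p.1, p.2)

theorem denseRange_ratPoint : DenseRange ratPoint :=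
  Rat.denseRange_cast.prodMap Rat.denseRange_cast

theorem mem_ballOfCode {z : ℝ × ℝ} {c : (ℚ × ℚ) × ℚ} :
    z ∈ ballOfCode c ↔ dist z (ratPoint c.1) < c.2 := Iff.rfl

theorem isOpen_ballOfCode (c : (ℚ × ℚ) × ℚ) : IsOpen (ballOfCode c) := isOpen_ball

theorem exists_mem_ballOfCode_subset {U : Set (ℝ × ℝ)} (hU : IsOpen U) {z : ℝ × ℝ} (hz : z ∈ U) :
    ∃ c, z ∈ ballOfCode c ∧ ballOfCode c ⊆ U := by
  obtain ⟨ε, hε, hball⟩ := Metric.isOpen_iff.1 hU z hz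
  obtain ⟨p, hp⟩ := denseRange_ratPoint.exists_dist_lt z (half_pos hε)
  obtain ⟨r, hpr, hrε⟩ := exists_rat_btwn hp
  refine ⟨(p, r), hpr, (ball_subset_ball' ?_).trans hball⟩
  change (r : ℝ) + dist (ratPoint p) z ≤ ε
  rw [dist_comm]
  linarith

theorem ratPoint_mem_ballOfCode {p : ℚ × ℚ} {c : (ℚ × ℚ) × ℚ} :
    ratPoint p ∈ ballOfCode c ↔ |p.1 - c.1.1| < c.2 ∧ |p.2 - c.1.2| < c.2 := by
  rw [mem_ballOfCode, Prod.dist_eq, max_lt_iff]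
  simp only [ratPoint, Real.dist_eq]
  norm_cast

variable {α ι : Type*} [Primcodable α]

theorem computablePred_rat_abs_sub_lt {f g r : α → ℚ} (hf : Computable f) (hg : Computable g)
    (hr : Computable r) : ComputablePred fun a => |f a - g a| < r a :=
  (computablePred_and (computablePred_rat_lt (computable_rat_sub hf hg) hr)
    (computablePred_rat_lt (computable_rat_sub hg hf) hr)).of_eq fun _ => abs_sub_lt_iff.symm

theorem computablePred_ratPoint_mem_ballOfCode {p : α → ℚ × ℚ} {c : α → (ℚ × ℚ) × ℚ}
    (hp : Computable p) (hc : Computable c) :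
    ComputablePred fun a => ratPoint (p a) ∈ ballOfCode (c a) := by
  have hcenter : Computable fun a => (c a).1 := Computable.fst.comp hc
  have hradius : Computable fun a => (c a).2 := Computable.snd.comp hc
  exact (computablePred_and
    (computablePred_rat_abs_sub_lt (Computable.fst.comp hp) (Computable.fst.comp hcenter) hradius)
    (computablePred_rat_abs_sub_lt (Computable.snd.comp hp) (Computable.snd.comp hcenter)
      hradius)).of_eq fun _ => ratPoint_mem_ballOfCode.symm

theorem IsPi01Closed.rePred_ratPoint_notMem {F : Set (ℝ × ℝ)} (hF : IsPi01Closed F)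
    {p : α → ℚ × ℚ} (hp : Computable p) : REPred fun a => ratPoint (p a) ∉ F := by
  obtain ⟨W, hW, rfl⟩ := hF
  have hcovered : REPred fun x : α × ((ℚ × ℚ) × ℚ) => W x.2 ∧ ratPoint (p x.1) ∈ ballOfCode x.2 :=
    rePred_and (rePred_comp hW Computable.snd) (computablePred_ratPoint_mem_ballOfCode
      (hp.comp Computable.fst) Computable.snd).to_re
  exact (rePred_exists (p := fun a c => W c ∧ ratPoint (p a) ∈ ballOfCode c) hcovered).of_eq
    fun a => by simp

/-- Rational approximations of a planar set `S` by finite lists of rational points tagged with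
indices. The lists do not depend on `A`, which only selects the tags of the points that count:
those lie in `S`, and those of the `N`-th list are `1 / (N + 1)`-dense in `S`. -/
structure IsRationalNet (net : ℕ → List (ι × ℚ × ℚ)) (A : Set ι) (S : Set (ℝ × ℝ)) : Prop where
  mem : ∀ N, ∀ x ∈ net N, x.1 ∈ A → ratPoint x.2 ∈ S
  exists_dist_le : ∀ N, ∀ z ∈ S, ∃ x ∈ net N, x.1 ∈ A ∧ dist z (ratPoint x.2) ≤ 1 / (N + 1)

namespace IsRationalNet

variable {net : ℕ → List (ι × ℚ × ℚ)} {A : Set ι} {S : Set (ℝ × ℝ)}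

theorem closure_inter_ballOfCode_nonempty_iff (h : IsRationalNet net A S) {c : (ℚ × ℚ) × ℚ} :
    (closure S ∩ ballOfCode c).Nonempty ↔
      ∃ N, ∃ x ∈ net N, x.1 ∈ A ∧ ratPoint x.2 ∈ ballOfCode c := by
  rw [closure_inter_open_nonempty_iff (isOpen_ballOfCode c)]
  constructor
  · rintro ⟨z, hzS, hzc⟩
    obtain ⟨ε, hε, hball⟩ := Metric.isOpen_iff.1 (isOpen_ballOfCode c) z hzc
    obtain ⟨N, hN⟩ := exists_nat_one_div_lt hε
    obtain ⟨x, hx, hxA, hzx⟩ := h.exists_dist_le N z hzS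
    exact ⟨N, x, hx, hxA, hball (mem_ball'.2 (hzx.trans_lt hN))⟩
  · rintro ⟨N, x, hx, hxA, hxc⟩
    exact ⟨ratPoint x.2, h.mem N x hx hxA, hxc⟩

theorem isCEClosed_closure [Primcodable ι] (h : IsRationalNet net A S)
    (hnet : Computable net) (hA : REPred (· ∈ A)) : IsCEClosed (closure S) := by
  have hmeets : REPred fun y : (((ℚ × ℚ) × ℚ) × ℕ) × ι × ℚ × ℚ =>
      y.2.1 ∈ A ∧ ratPoint y.2.2 ∈ ballOfCode y.1.1 :=
    rePred_and (rePred_comp hA (Computable.fst.comp Computable.snd))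
      (computablePred_ratPoint_mem_ballOfCode (Computable.snd.comp Computable.snd)
        (Computable.fst.comp Computable.fst)).to_re
  exact (rePred_exists (rePred_exists_mem_list
    (p := fun (y : ((ℚ × ℚ) × ℚ) × ℕ) x => x.1 ∈ A ∧ ratPoint x.2 ∈ ballOfCode y.1)
    hmeets (hnet.comp Computable.snd))).of_eq
    fun c => h.closure_inter_ballOfCode_nonempty_iff.symm

/-- Stage `N` of the net certifies that the approximated set misses the ball coded by `c`: no point
with a tag in `A` lies in that ball, even after its radius is increased by the mesh of the net. -/
def Misses (net : ℕ → List (ι × ℚ × ℚ)) (A : Set ι) (c : (ℚ × ℚ) × ℚ) (N : ℕ) : Prop :=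
  ∀ x ∈ net N, x.1 ∉ A ∨ ratPoint x.2 ∉ ballOfCode (c.1, c.2 + 1 / (N + 1 : ℕ))

theorem rePred_exists_misses [Primcodable ι] (hnet : Computable net) (hA : REPred (· ∉ A)) :
    REPred fun c => ∃ N, Misses net A c N := by
  have hcode : Computable fun y : (((ℚ × ℚ) × ℚ) × ℕ) × ι × ℚ × ℚ =>
      (y.1.1.1, y.1.1.2 + 1 / ((y.1.2 + 1 : ℕ) : ℚ)) := by
    have hmesh := computable_natCast_div (α := (((ℚ × ℚ) × ℚ) × ℕ) × ι × ℚ × ℚ)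
      (Computable.const 1) (Computable.succ.comp (Computable.snd.comp Computable.fst))
      fun _ => Nat.succ_ne_zero _
    have hc := Computable.fst.comp (Computable.fst (α := ((ℚ × ℚ) × ℚ) × ℕ) (β := ι × ℚ × ℚ))
    exact (Computable.fst.comp hc).pair
      ((computable_rat_add (Computable.snd.comp hc) hmesh).of_eq fun _ => by simp)
  have hoff : REPred fun y : (((ℚ × ℚ) × ℚ) × ℕ) × ι × ℚ × ℚ => y.2.1 ∉ A ∨
      ratPoint y.2.2 ∉ ballOfCode (y.1.1.1, y.1.1.2 + 1 / ((y.1.2 + 1 : ℕ) : ℚ)) :=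
    rePred_or (rePred_comp hA (Computable.fst.comp Computable.snd))
      (computablePred_ratPoint_mem_ballOfCode (Computable.snd.comp Computable.snd) hcode).not.to_re
  exact rePred_exists (rePred_forall_mem_list
    (p := fun (y : ((ℚ × ℚ) × ℚ) × ℕ) (x : ι × ℚ × ℚ) => x.1 ∉ A ∨
      ratPoint x.2 ∉ ballOfCode (y.1.1, y.1.2 + 1 / ((y.2 + 1 : ℕ) : ℚ)))
    hoff (hnet.comp Computable.snd))

theorem disjoint_ballOfCode_of_misses (h : IsRationalNet net A S) {c : (ℚ × ℚ) × ℚ} {N : ℕ}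
    (hN : Misses net A c N) : Disjoint (closure S) (ballOfCode c) := by
  refine Disjoint.closure_left (disjoint_left.2 fun z hzS hzc => ?_) (isOpen_ballOfCode c)
  obtain ⟨x, hx, hxA, hzx⟩ := h.exists_dist_le N z hzS
  refine (hN x hx).elim (fun hx' => hx' hxA) fun hx' => hx' ?_
  rw [mem_ballOfCode] at hzc ⊢
  calc dist (ratPoint x.2) (ratPoint c.1)
      ≤ dist z (ratPoint c.1) + dist z (ratPoint x.2) := by
        rw [add_comm, dist_comm z (ratPoint x.2)]
        exact dist_triangle _ _ _
    _ < c.2 + 1 / (N + 1) := add_lt_add_of_lt_of_le hzc hzx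
    _ = ((c.2 + 1 / (N + 1 : ℕ) : ℚ) : ℝ) := by push_cast; rfl

theorem exists_misses_of_notMem_closure (h : IsRationalNet net A S) {z : ℝ × ℝ}
    (hz : z ∉ closure S) : ∃ c, z ∈ ballOfCode c ∧ ∃ N, Misses net A c N := by
  obtain ⟨c, hzc, hc⟩ := exists_mem_ballOfCode_subset isClosed_closure.isOpen_compl hz
  obtain ⟨r, hzr, hrc⟩ := exists_rat_btwn (mem_ballOfCode.1 hzc)
  obtain ⟨N, hN⟩ := exists_nat_one_div_lt (sub_pos.2 hrc)
  refine ⟨(c.1, r), hzr, N, fun x hx => or_iff_not_imp_left.2 fun hxA hxc => ?_⟩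
  have hradius : ((r + 1 / (N + 1 : ℕ) : ℚ) : ℝ) < c.2 := by
    push_cast
    linarith
  exact hc ((mem_ballOfCode.1 hxc).trans hradius)
    (subset_closure (h.mem N x hx (not_not.1 hxA)))

theorem isPi01Closed_closure [Primcodable ι] (h : IsRationalNet net A S)
    (hnet : Computable net) (hA : REPred (· ∉ A)) : IsPi01Closed (closure S) := by
  refine ⟨_, rePred_exists_misses hnet hA, Set.ext fun z => ⟨fun hz => ⟨trivial, ?_⟩, fun hz => ?_⟩⟩
  · simp only [mem_iUnion, not_exists]
    rintro c ⟨N, hN⟩ hzc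
    exact disjoint_left.1 (h.disjoint_ballOfCode_of_misses hN) hz hzc
  · by_contra hzS
    obtain ⟨c, hzc, hc⟩ := h.exists_misses_of_notMem_closure hzS
    exact hz.2 (mem_biUnion hc hzc)

end IsRationalNet

end RationalNets

section PlanarEmbedding

/-- The two contractions of the plane which turn `ψ(σ)` into `ψ(bσ)`. They are defined over an
arbitrary field in order to be computed on rational points. -/
def branchMap {K : Type*} [Field K] (b : Bool) (p : K × K) : K × K :=
  ((p.1 + cond b 2 0) / 3, p.2 / 2)

theorem psiPt_nil : psiPt [] = (1 / 2, 1) := by simp [psiPt]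

theorem psiPt_cons (b : Bool) (σ : List Bool) : psiPt (b :: σ) = branchMap b (psiPt σ) := by
  have hsum : ∑ i ∈ Finset.range σ.length,
        (if σ.getD i false then (3 : ℝ) ^ (-((i + 1 : ℕ) + 1 : ℤ)) else 0) =
      (∑ i ∈ Finset.range σ.length,
        (if σ.getD i false then (3 : ℝ) ^ (-((i : ℤ) + 1)) else 0)) / 3 := by
    rw [Finset.sum_div]
    refine Finset.sum_congr rfl fun i _ => ?_
    split_ifs
    · rw [div_eq_mul_inv, ← zpow_neg_one, ← zpow_add₀ three_ne_zero]
      push_cast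
      congr 1
    · simp
  have hpow (K : ℝ) (hK : K ≠ 0) :
      K ^ (-((σ.length + 1 : ℕ) : ℤ)) = K ^ (-(σ.length : ℤ)) / K := by
    rw [Nat.cast_succ, neg_add, ← sub_eq_add_neg, zpow_sub_one₀ hK, div_eq_mul_inv]
  simp only [psiPt, branchMap, List.length_cons, Finset.sum_range_succ', List.getD_cons_succ,
    List.getD_cons_zero, hsum, hpow 3 three_ne_zero, hpow 2 two_ne_zero]
  cases b <;> norm_num <;> ring

theorem branchMap_mem_Icc (b : Bool) {p : ℝ × ℝ} (hp : p ∈ Icc (0 : ℝ × ℝ) 1) :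
    branchMap b p ∈ Icc (0 : ℝ × ℝ) 1 := by
  simp only [mem_Icc, Prod.le_def, Prod.fst_zero, Prod.snd_zero, Prod.fst_one, Prod.snd_one,
    branchMap] at hp ⊢
  obtain ⟨⟨hx₀, hy₀⟩, hx₁, hy₁⟩ := hp
  cases b <;> simp only [cond_true, cond_false] <;> refine ⟨⟨?_, ?_⟩, ?_, ?_⟩ <;> linarith

theorem dist_branchMap_le (b : Bool) (p q : ℝ × ℝ) :
    dist (branchMap b p) (branchMap b q) ≤ dist p q / 2 := by
  rw [Prod.dist_eq, Prod.dist_eq, ← max_div_div_right zero_le_two]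
  refine max_le_max ?_ ?_ <;> simp only [branchMap, Real.dist_eq, ← sub_div, abs_div]
  · rw [add_sub_add_right_eq_sub, abs_of_pos (three_pos (α := ℝ))]
    exact div_le_div_of_nonneg_left (abs_nonneg _) two_pos (by norm_num)
  · rw [abs_two]

theorem dist_le_dist_branchMap (b : Bool) (p q : ℝ × ℝ) :
    dist p q / 3 ≤ dist (branchMap b p) (branchMap b q) := by
  rw [Prod.dist_eq, Prod.dist_eq, ← max_div_div_right zero_le_three]
  refine max_le_max ?_ ?_ <;> simp only [branchMap, Real.dist_eq, ← sub_div, abs_div]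
  · rw [add_sub_add_right_eq_sub, abs_of_pos (three_pos (α := ℝ))]
  · rw [abs_two]
    exact div_le_div_of_nonneg_left (abs_nonneg _) two_pos (by norm_num)

theorem exists_branchMap_eq_of_mem_segment {b : Bool} {p q z : ℝ × ℝ}
    (hz : z ∈ segment ℝ (branchMap b p) (branchMap b q)) :
    ∃ w ∈ segment ℝ p q, branchMap b w = z := by
  obtain ⟨s, t, hs, ht, hst, rfl⟩ := hz
  refine ⟨s • p + t • q, ⟨s, t, hs, ht, hst, rfl⟩, ?_⟩
  obtain rfl := eq_sub_of_add_eq hst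
  ext <;> simp only [branchMap, Prod.fst_add, Prod.snd_add, Prod.smul_fst, Prod.smul_snd,
    smul_eq_mul] <;> ring

theorem psiPt_mem_Icc (σ : List Bool) : psiPt σ ∈ Icc (0 : ℝ × ℝ) 1 := by
  induction σ with
  | nil => rw [psiPt_nil, mem_Icc, Prod.le_def, Prod.le_def]; norm_num
  | cons b σ ih => exact psiPt_cons b σ ▸ branchMap_mem_Icc b ih

theorem psiPt_snd (σ : List Bool) : (psiPt σ).2 = (1 / 2) ^ σ.length := by
  induction σ with
  | nil => simp [psiPt_nil]
  | cons b σ ih =>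
    simp only [psiPt_cons, branchMap, ih, List.length_cons, pow_succ]
    ring

theorem dist_psiPt_le_one (σ τ : List Bool) : dist (psiPt σ) (psiPt τ) ≤ 1 := by
  have hσ := psiPt_mem_Icc σ
  have hτ := psiPt_mem_Icc τ
  rw [Prod.dist_eq]
  exact max_le (Real.dist_le_of_mem_Icc_01 ⟨hσ.1.1, hσ.2.1⟩ ⟨hτ.1.1, hτ.2.1⟩)
    (Real.dist_le_of_mem_Icc_01 ⟨hσ.1.2, hσ.2.2⟩ ⟨hτ.1.2, hτ.2.2⟩)

theorem dist_psiPt_append_le (ρ δ : List Bool) :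
    dist (psiPt (ρ ++ δ)) (psiPt ρ) ≤ (1 / 2) ^ ρ.length := by
  induction ρ with
  | nil => simpa using dist_psiPt_le_one δ []
  | cons b ρ ih =>
    rw [List.cons_append, psiPt_cons, psiPt_cons, List.length_cons, pow_succ]
    linarith [dist_branchMap_le b (psiPt (ρ ++ δ)) (psiPt ρ)]

/-- The segment from `ψ(σ⁻)` to `ψ(σ)`; for the empty string it degenerates to `{ψ(⟨⟩)}`. -/
def psiEdge (σ : List Bool) : Set (ℝ × ℝ) := segment ℝ (psiPt σ.dropLast) (psiPt σ)

theorem psiPt_mem_psiEdge (σ : List Bool) : psiPt σ ∈ psiEdge σ := right_mem_segment ℝ _ _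

theorem psiSet_eq_closure_iUnion_psiEdge (T : Set (List Bool)) :
    PsiSet T = closure (⋃ σ ∈ T, psiEdge σ) := by
  refine congrArg closure (Subset.antisymm (union_subset ?_ ?_) ?_)
  · rintro _ ⟨σ, hσ, rfl⟩
    exact mem_biUnion hσ (psiPt_mem_psiEdge σ)
  · exact iUnion₂_mono fun σ _ => iUnion_subset fun _ => Subset.rfl
  · refine iUnion₂_subset fun σ hσ z hz => ?_
    by_cases hnil : σ = []
    · subst hnil
      rw [psiEdge, List.dropLast_nil, segment_same, mem_singleton_iff] at hz
      exact Or.inl ⟨[], hσ, hz.symm⟩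
    · exact Or.inr (mem_biUnion hσ (mem_iUnion.2 ⟨hnil, hz⟩))

theorem exists_mem_psiEdge_branchMap_eq {b : Bool} {τ : List Bool} (hτ : τ ≠ []) {z : ℝ × ℝ}
    (hz : z ∈ psiEdge (b :: τ)) : ∃ w ∈ psiEdge τ, branchMap b w = z := by
  rw [psiEdge, List.dropLast_cons_of_ne_nil hτ, psiPt_cons, psiPt_cons] at hz
  exact exists_branchMap_eq_of_mem_segment hz

theorem pow_length_le_snd_of_mem_psiEdge {τ : List Bool} {z : ℝ × ℝ} (hz : z ∈ psiEdge τ) :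
    (1 / 2) ^ τ.length ≤ z.2 := by
  have hconvex := (convex_Ici ((1 / 2 : ℝ) ^ τ.length)).linear_preimage (LinearMap.snd ℝ ℝ ℝ)
  refine hconvex.segment_subset ?_ (psiPt_snd τ).ge hz
  change (1 / 2 : ℝ) ^ τ.length ≤ (psiPt τ.dropLast).2
  rw [psiPt_snd, List.length_dropLast]
  exact pow_le_pow_of_le_one (by norm_num) (by norm_num) (Nat.sub_le _ _)

theorem psiPt_cons_fst_mem (b : Bool) (σ : List Bool) :
    (psiPt (b :: σ)).1 ∈ cond b (Ici (2 / 3 : ℝ)) (Iic (1 / 3)) := by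
  obtain ⟨⟨hx₀, -⟩, ⟨hx₁, -⟩⟩ := psiPt_mem_Icc σ
  simp only [Prod.fst_zero, Prod.fst_one] at hx₀ hx₁
  cases b <;> simp only [psiPt_cons, branchMap, cond_true, cond_false, mem_Ici, mem_Iic] <;>
    linarith

theorem fst_mem_of_mem_psiEdge_cons {b : Bool} {τ : List Bool} {z : ℝ × ℝ}
    (hz : z ∈ psiEdge (b :: τ)) : z.1 ∈ cond b (Ici (1 / 2 : ℝ)) (Iic (1 / 2)) := by
  have hconvex : Convex ℝ (cond b (Ici (1 / 2 : ℝ)) (Iic (1 / 2))) := by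
    cases b
    · exact convex_Iic _
    · exact convex_Ici _
  have hcons (σ : List Bool) : (psiPt (b :: σ)).1 ∈ cond b (Ici (1 / 2 : ℝ)) (Iic (1 / 2)) := by
    have hσ := psiPt_cons_fst_mem b σ
    cases b <;> simp only [cond_true, cond_false, mem_Ici, mem_Iic] at hσ ⊢ <;> linarith
  have hnil : (psiPt []).1 ∈ cond b (Ici (1 / 2 : ℝ)) (Iic (1 / 2)) := by
    cases b <;> simp [psiPt_nil]
  refine (hconvex.linear_preimage (LinearMap.fst ℝ ℝ ℝ)).segment_subset ?_ (hcons τ) hz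
  cases τ with
  | nil => exact hnil
  | cons c τ => exact hcons (c :: τ).dropLast

theorem length_le_of_mem_psiEdge_of_dist_lt {σ τ : List Bool} {z : ℝ × ℝ} (hz : z ∈ psiEdge τ)
    (hdist : dist z (psiPt σ) < (1 / 3) ^ (σ.length + 1)) : σ.length ≤ τ.length := by
  by_contra! hlt
  have hsnd : |z.2 - (1 / 2) ^ σ.length| < (1 / 3) ^ (σ.length + 1) :=
    psiPt_snd σ ▸ (le_max_right _ _).trans_lt hdist
  have hheight : 2 * (1 / 2 : ℝ) ^ σ.length ≤ z.2 := calc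
    2 * (1 / 2 : ℝ) ^ σ.length ≤ 2 * (1 / 2) ^ (τ.length + 1) :=
      mul_le_mul_of_nonneg_left (pow_le_pow_of_le_one (by norm_num) (by norm_num) hlt) zero_le_two
    _ = (1 / 2) ^ τ.length := by ring
    _ ≤ z.2 := pow_length_le_snd_of_mem_psiEdge hz
  have hradius : (1 / 3 : ℝ) ^ (σ.length + 1) ≤ (1 / 2) ^ σ.length := calc
    (1 / 3 : ℝ) ^ (σ.length + 1) ≤ (1 / 3) ^ σ.length :=
      pow_le_pow_of_le_one (by norm_num) (by norm_num) (Nat.le_succ _)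
    _ ≤ (1 / 2) ^ σ.length := pow_le_pow_left₀ (by norm_num) (by norm_num) _
  linarith [le_abs_self (z.2 - (1 / 2) ^ σ.length)]

theorem eq_of_mem_psiEdge_cons_of_dist_lt {b c : Bool} {σ τ : List Bool} {z : ℝ × ℝ}
    (hz : z ∈ psiEdge (c :: τ)) (hdist : dist z (psiPt (b :: σ)) < 1 / 6) : b = c := by
  have hz₁ := fst_mem_of_mem_psiEdge_cons hz
  have hσ₁ := psiPt_cons_fst_mem b σ
  have hfst := abs_lt.1 ((le_max_left _ _).trans_lt hdist)
  cases b <;> cases c <;> simp only [cond_true, cond_false, mem_Ici, mem_Iic] at hz₁ hσ₁ <;>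
    first | rfl | linarith

-- Pulling back along `branchMap` removes the common first letter and triples the radius at most.
theorem prefix_of_mem_psiEdge_of_dist_lt {σ τ : List Bool} {z : ℝ × ℝ} (hz : z ∈ psiEdge τ)
    (hdist : dist z (psiPt σ) < (1 / 3) ^ (σ.length + 1)) : σ <+: τ := by
  induction σ generalizing τ z with
  | nil => exact List.nil_prefix
  | cons b σ ih =>
    have hlength := length_le_of_mem_psiEdge_of_dist_lt hz hdist
    obtain - | ⟨c, τ⟩ := τ
    · simp at hlength
    have hsmall : (1 / 3 : ℝ) ^ ((b :: σ).length + 1) ≤ 1 / 6 := calc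
      (1 / 3 : ℝ) ^ ((b :: σ).length + 1) ≤ (1 / 3) ^ 2 :=
        pow_le_pow_of_le_one (by norm_num) (by norm_num) (by simp)
      _ ≤ 1 / 6 := by norm_num
    obtain rfl := eq_of_mem_psiEdge_cons_of_dist_lt hz (hdist.trans_le hsmall)
    rw [List.prefix_cons_inj]
    by_cases hτ : τ = []
    · subst hτ
      simpa using hlength
    obtain ⟨w, hw, rfl⟩ := exists_mem_psiEdge_branchMap_eq hτ hz
    have hdist' : dist w (psiPt σ) < (1 / 3) ^ (σ.length + 1) := by
      rw [psiPt_cons, List.length_cons, pow_succ] at hdist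
      linarith [dist_le_dist_branchMap b w (psiPt σ)]
    exact ih hw hdist'

theorem psiPt_mem_psiSet {T : Set (List Bool)} {σ : List Bool} (hσ : σ ∈ T) :
    psiPt σ ∈ PsiSet T :=
  subset_closure (Or.inl (mem_image_of_mem psiPt hσ))

namespace IsTreeOfStrings

variable {T : Set (List Bool)}

theorem psiSet_inter_ball_nonempty_iff (hT : IsTreeOfStrings T) {σ : List Bool} :
    (PsiSet T ∩ ball (psiPt σ) ((1 / 3) ^ (σ.length + 1))).Nonempty ↔ σ ∈ T := by
  refine ⟨fun h => ?_, fun hσ => ⟨psiPt σ, psiPt_mem_psiSet hσ, mem_ball_self (by positivity)⟩⟩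
  rw [psiSet_eq_closure_iUnion_psiEdge, closure_inter_open_nonempty_iff isOpen_ball] at h
  obtain ⟨z, hz, hball⟩ := h
  obtain ⟨τ, hτ, hzτ⟩ := mem_iUnion₂.1 hz
  exact hT τ hτ σ (prefix_of_mem_psiEdge_of_dist_lt hzτ hball)

theorem psiPt_mem_psiSet_iff (hT : IsTreeOfStrings T) {σ : List Bool} :
    psiPt σ ∈ PsiSet T ↔ σ ∈ T :=
  ⟨fun h => hT.psiSet_inter_ball_nonempty_iff.1 ⟨psiPt σ, h, mem_ball_self (by positivity)⟩,
    psiPt_mem_psiSet⟩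

end IsTreeOfStrings

end PlanarEmbedding

section PsiNet

theorem exists_dist_lineMap_div_le {E : Type*} [NormedAddCommGroup E] [NormedSpace ℝ E]
    {a b z : E} (hz : z ∈ segment ℝ a b) {n : ℕ} (hn : 0 < n) :
    ∃ k ≤ n, dist z (AffineMap.lineMap a b ((k : ℝ) / n)) ≤ dist a b / n := by
  rw [segment_eq_image_lineMap] at hz
  obtain ⟨t, ⟨ht₀, ht₁⟩, rfl⟩ := hz
  have hn' : (0 : ℝ) < n := Nat.cast_pos.2 hn
  refine ⟨⌊t * n⌋₊, Nat.floor_le_of_le (mul_le_of_le_one_left hn'.le ht₁), ?_⟩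
  have hfloor : |t * n - ⌊t * n⌋₊| ≤ 1 :=
    abs_le.2 ⟨by linarith [Nat.floor_le (mul_nonneg ht₀ hn'.le)],
      by linarith [Nat.lt_floor_add_one (t * n)]⟩
  calc dist (AffineMap.lineMap a b t) (AffineMap.lineMap a b ((⌊t * n⌋₊ : ℝ) / n))
      = |t * n - ⌊t * n⌋₊| / n * dist a b := by
        rw [dist_lineMap_lineMap, Real.dist_eq, ← abs_of_pos hn', ← abs_div, abs_of_pos hn',
          sub_div, mul_div_cancel_right₀ t hn'.ne']
    _ ≤ 1 / n * dist a b := by gcongr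
    _ = dist a b / n := by ring

variable {α : Type*} [Primcodable α]

theorem computable_branchMap {b : α → Bool} {p : α → ℚ × ℚ} (hb : Computable b)
    (hp : Computable p) : Computable fun a => branchMap (b a) (p a) := by
  have hfst := computable_rat_mul (computable_rat_add (Computable.fst.comp hp)
    (Computable.cond hb (Computable.const 2) (Computable.const 0))) (Computable.const (1 / 3))
  have hsnd := computable_rat_mul (Computable.snd.comp hp) (Computable.const (1 / 2))
  exact (hfst.pair hsnd).of_eq fun a => by simp only [branchMap]; ring_nf

/-- The point `ψ(σ)` as an explicit rational point. -/
def psiRat (σ : List Bool) : ℚ × ℚ := σ.foldr branchMap (1 / 2, 1)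

theorem computable_psiRat : Computable psiRat :=
  computable_list_foldr Computable.id (Computable.const (1 / 2, 1))
    (h := fun _ x => branchMap x.1 x.2)
    (computable_branchMap (Computable.fst.comp Computable.snd)
      (Computable.snd.comp Computable.snd))

theorem ratPoint_branchMap (b : Bool) (p : ℚ × ℚ) :
    ratPoint (branchMap b p) = branchMap b (ratPoint p) := by
  cases b <;> simp [ratPoint, branchMap]

theorem ratPoint_psiRat (σ : List Bool) : ratPoint (psiRat σ) = psiPt σ := by
  induction σ with
  | nil => simp [psiRat, psiPt_nil, ratPoint]
  | cons b σ ih => rw [psiPt_cons, ← ih, ← ratPoint_branchMap]; rfl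

theorem computable_rat_lineMap {p q : α → ℚ × ℚ} {t : α → ℚ} (hp : Computable p)
    (hq : Computable q) (ht : Computable t) :
    Computable fun a => AffineMap.lineMap (p a) (q a) (t a) := by
  have hcoord {u v : α → ℚ} (hu : Computable u) (hv : Computable v) :
      Computable fun a => t a * (v a - u a) + u a :=
    computable_rat_add (computable_rat_mul ht (computable_rat_sub hv hu)) hu
  exact ((hcoord (Computable.fst.comp hp) (Computable.fst.comp hq)).pair
    (hcoord (Computable.snd.comp hp) (Computable.snd.comp hq))).of_eq fun a => by
      ext <;> simp [AffineMap.lineMap_apply]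

theorem ratPoint_lineMap (p q : ℚ × ℚ) (t : ℚ) :
    ratPoint (AffineMap.lineMap p q t) = AffineMap.lineMap (ratPoint p) (ratPoint q) (t : ℝ) := by
  ext <;> simp [ratPoint, AffineMap.lineMap_apply]

/-- The list of all binary strings of length at most `N`. -/
def stringsUpTo : ℕ → List (List Bool)
  | 0 => [[]]
  | N + 1 => [] :: [false, true].flatMap fun b => (stringsUpTo N).map (List.cons b)

theorem mem_stringsUpTo {N : ℕ} {σ : List Bool} : σ ∈ stringsUpTo N ↔ σ.length ≤ N := by
  induction N generalizing σ with
  | zero => simp [stringsUpTo]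
  | succ N ih =>
    rcases σ with - | ⟨b, σ⟩
    · simp [stringsUpTo]
    · cases b <;> simp [stringsUpTo, ih]

theorem computable_stringsUpTo : Computable stringsUpTo := by
  have hstep : Computable₂ fun (_ : ℕ) (x : ℕ × List (List Bool)) =>
      [] :: [false, true].flatMap fun b => x.2.map (List.cons b) :=
    Computable.list_cons.comp (Computable.const []) (computable_list_flatMap (Computable.const _)
      (computable_list_map (Computable.snd.comp (Computable.snd.comp Computable.fst))
        (Computable.list_cons.comp (Computable.snd.comp Computable.fst) Computable.snd)))
  refine (Computable.nat_rec Computable.id (Computable.const [[]]) hstep).of_eq fun N => ?_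
  induction N with
  | zero => rfl
  | succ N ih => rw [stringsUpTo, ← ih]; rfl

theorem computable_dropLast : Computable (List.dropLast (α := α)) :=
  (Primrec.list_take.comp (Primrec.nat_sub.comp Primrec.list_length (Primrec.const 1))
    Primrec.id).to_comp.of_eq fun _ => List.dropLast_eq_take.symm

/-- The equidistant subdivision points of the edges at the strings of length at most `N`, each
edge being cut into `N + 1` pieces. -/
def psiNet (N : ℕ) : List (List Bool × ℚ × ℚ) :=
  (stringsUpTo N).flatMap fun σ => (List.range (N + 2)).map fun k : ℕ =>
    (σ, AffineMap.lineMap (psiRat σ.dropLast) (psiRat σ) ((k : ℚ) / (N + 1 : ℕ)))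

theorem computable_psiNet : Computable psiNet := by
  have hgrid : Computable₂ fun (x : ℕ × List Bool) (k : ℕ) => (x.2, AffineMap.lineMap
      (psiRat x.2.dropLast) (psiRat x.2) ((k : ℚ) / (x.1 + 1 : ℕ))) := by
    have hσ := Computable.snd.comp (Computable.fst (α := ℕ × List Bool) (β := ℕ))
    have ht := computable_natCast_div (Computable.snd (α := ℕ × List Bool) (β := ℕ))
      (Computable.succ.comp (Computable.fst.comp Computable.fst)) fun _ => Nat.succ_ne_zero _
    exact hσ.pair (computable_rat_lineMap (computable_psiRat.comp (computable_dropLast.comp hσ))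
      (computable_psiRat.comp hσ) ht)
  have hrange : Computable fun x : ℕ × List Bool => List.range (x.1 + 2) :=
    Primrec.list_range.to_comp.comp
      (Computable.succ.comp (Computable.succ.comp Computable.fst))
  exact computable_list_flatMap computable_stringsUpTo (computable_list_map hrange hgrid)

theorem mem_psiNet {N : ℕ} {σ : List Bool} {p : ℚ × ℚ} : (σ, p) ∈ psiNet N ↔
    σ.length ≤ N ∧ ∃ k ≤ N + 1,
      AffineMap.lineMap (psiRat σ.dropLast) (psiRat σ) ((k : ℚ) / (N + 1 : ℕ)) = p := by
  simp only [psiNet, List.mem_flatMap, mem_stringsUpTo, List.mem_map, List.mem_range,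
    Nat.lt_succ_iff, Prod.mk.injEq]
  constructor
  · rintro ⟨_, hσ, k, hk, rfl, hp⟩
    exact ⟨hσ, k, hk, hp⟩
  · rintro ⟨hσ, k, hk, hp⟩
    exact ⟨σ, hσ, k, hk, rfl, hp⟩

theorem ratPoint_mem_psiEdge_of_mem_psiNet {N : ℕ} {σ : List Bool} {p : ℚ × ℚ}
    (h : (σ, p) ∈ psiNet N) : ratPoint p ∈ psiEdge σ := by
  obtain ⟨-, k, hk, rfl⟩ := mem_psiNet.1 h
  rw [ratPoint_lineMap, ratPoint_psiRat, ratPoint_psiRat, psiEdge, segment_eq_image_lineMap]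
  refine mem_image_of_mem _ ⟨by positivity, ?_⟩
  push_cast
  exact div_le_one_of_le₀ (by exact_mod_cast hk) (by positivity)

theorem exists_mem_psiNet_dist_le {N : ℕ} {τ : List Bool} (hτ : τ.length ≤ N) {z : ℝ × ℝ}
    (hz : z ∈ psiEdge τ) : ∃ p, (τ, p) ∈ psiNet N ∧ dist z (ratPoint p) ≤ 1 / (N + 1) := by
  obtain ⟨k, hk, hdist⟩ := exists_dist_lineMap_div_le hz N.succ_pos
  refine ⟨_, mem_psiNet.2 ⟨hτ, k, hk, rfl⟩, ?_⟩
  rw [ratPoint_lineMap, ratPoint_psiRat, ratPoint_psiRat]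
  push_cast at hdist ⊢
  exact hdist.trans (div_le_div_of_nonneg_right (dist_psiPt_le_one _ _) (by positivity))

theorem psiEdge_subset_closedBall {ρ τ : List Bool} (hρ : ρ <+: τ.dropLast) :
    psiEdge τ ⊆ closedBall (psiPt ρ) ((1 / 2) ^ ρ.length) := by
  have hclose {σ : List Bool} (hσ : ρ <+: σ) :
      psiPt σ ∈ closedBall (psiPt ρ) ((1 / 2) ^ ρ.length) := by
    obtain ⟨δ, rfl⟩ := hσ
    exact dist_psiPt_append_le ρ δ
  exact (convex_closedBall _ _).segment_subset (hclose hρ) (hclose (hρ.trans τ.dropLast_prefix))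

theorem one_half_pow_le_one_div (N : ℕ) : (1 / 2 : ℝ) ^ N ≤ 1 / (N + 1) := by
  rw [one_div_pow]
  exact one_div_le_one_div_of_le (by positivity) (by exact_mod_cast N.lt_two_pow_self)

theorem IsTreeOfStrings.isRationalNet_psiNet {T : Set (List Bool)} (hT : IsTreeOfStrings T) :
    IsRationalNet psiNet T (⋃ σ ∈ T, psiEdge σ) where
  mem N x hx hxT := mem_biUnion hxT (ratPoint_mem_psiEdge_of_mem_psiNet hx)
  exists_dist_le N z hz := by
    obtain ⟨τ, hτ, hzτ⟩ := mem_iUnion₂.1 hz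
    rcases le_or_gt τ.length N with hlength | hlength
    · obtain ⟨p, hp, hdist⟩ := exists_mem_psiNet_dist_le hlength hzτ
      exact ⟨(τ, p), hp, hτ, hdist⟩
    · have hρ : (τ.take N).length = N := List.length_take_of_le hlength.le
      have htake : τ.take N <+: τ.dropLast := by
        rw [List.dropLast_eq_take]
        exact List.take_prefix_take_left (Nat.le_sub_one_of_lt hlength)
      refine ⟨(τ.take N, psiRat (τ.take N)), mem_psiNet.2 ⟨hρ.le, N + 1, le_rfl, ?_⟩,
        hT τ hτ _ (List.take_prefix N τ), ?_⟩
      · rw [div_self (Nat.cast_ne_zero.2 N.succ_ne_zero), AffineMap.lineMap_apply_one]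
      · rw [ratPoint_psiRat]
        have hball := psiEdge_subset_closedBall htake hzτ
        rw [hρ] at hball
        exact (mem_closedBall.1 hball).trans (one_half_pow_le_one_div N)

end PsiNet

section Transfer

namespace IsTreeOfStrings

variable {T : Set (List Bool)}

theorem isPi01Closed_psiSet (hT : IsTreeOfStrings T) (h : REPred (· ∉ T)) :
    IsPi01Closed (PsiSet T) :=
  psiSet_eq_closure_iUnion_psiEdge T ▸ hT.isRationalNet_psiNet.isPi01Closed_closure
    computable_psiNet h

theorem isCEClosed_psiSet (hT : IsTreeOfStrings T) (h : REPred (· ∈ T)) :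
    IsCEClosed (PsiSet T) :=
  psiSet_eq_closure_iUnion_psiEdge T ▸ hT.isRationalNet_psiNet.isCEClosed_closure
    computable_psiNet h

theorem rePred_notMem_of_isPi01Closed (hT : IsTreeOfStrings T) (h : IsPi01Closed (PsiSet T)) :
    REPred (· ∉ T) :=
  (h.rePred_ratPoint_notMem computable_psiRat).of_eq fun σ => by
    rw [ratPoint_psiRat, hT.psiPt_mem_psiSet_iff]

theorem rePred_mem_of_isCEClosed (hT : IsTreeOfStrings T) (h : IsCEClosed (PsiSet T)) :
    REPred (· ∈ T) := by
  have hpow : Computable fun σ : List Bool => 3 ^ (σ.length + 1) :=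
    (Primrec₂.unpaired'.1 Nat.Primrec.pow).to_comp.comp (Computable.const 3)
      (Computable.succ.comp Computable.list_length)
  have hradius := computable_natCast_div (Computable.const 1) hpow fun _ => by positivity
  refine (rePred_comp h (computable_psiRat.pair hradius)).of_eq fun σ => ?_
  have hball : ballOfCode (psiRat σ, ((1 : ℕ) : ℚ) / (3 ^ (σ.length + 1) : ℕ)) =
      ball (psiPt σ) ((1 / 3) ^ (σ.length + 1)) := by
    rw [← ratPoint_psiRat]
    ext z
    rw [mem_ballOfCode, mem_ball]
    push_cast
    rw [one_div_pow]
  rw [hball, hT.psiSet_inter_ball_nonempty_iff]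

end IsTreeOfStrings

end Transfer

theorem psiSet_computability_transfer (T : Set (List Bool)) (hT : IsTreeOfStrings T) :
    (REPred (fun σ : List Bool => σ ∉ T) ↔ IsPi01Closed (PsiSet T)) ∧
    (REPred (fun σ : List Bool => σ ∈ T) ↔ IsCEClosed (PsiSet T)) ∧
    (ComputablePred (fun σ : List Bool => σ ∈ T) ↔ IsComputableClosed (PsiSet T)) := by
  have hpi : REPred (fun σ : List Bool => σ ∉ T) ↔ IsPi01Closed (PsiSet T) :=
    ⟨hT.isPi01Closed_psiSet, hT.rePred_notMem_of_isPi01Closed⟩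
  have hce : REPred (fun σ : List Bool => σ ∈ T) ↔ IsCEClosed (PsiSet T) :=
    ⟨hT.isCEClosed_psiSet, hT.rePred_mem_of_isCEClosed⟩
  refine ⟨hpi, hce, ?_⟩
  rw [ComputablePred.computable_iff_re_compl_re', hpi, hce, IsComputableClosed, and_comm]
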